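/- arXiv:1208.3811 — 5 statements merged into one kernel-verified Lean document; each statement's English description precedes it below -/
import Mathlib

section
/- Let 𝒳 and 𝒲 be standard Borel spaces, R a probability measure on 𝒲, f : 𝒳 × 𝒲 → 𝒳 measurable, and let F_t : 𝒳 × 𝒲^t → 𝒳 be the t-step state transition maps. Suppose P_* is a nominal invariant state distribution, i.e. (P_* × R) ∘ f⁻¹ = P_*. Let Φ be a probability measure on 𝒳 with Φ ≪ P_*, and let κ be a Markov kernel from 𝒳 to 𝒲^t with κ(x) ≪ R^{⊗t} for Φ-almost every x. Let μ := Φ ⊗ κ be the joint measure on 𝒳 × 𝒲^t and P_t := μ ∘ F_t⁻¹. Then the relative entropy dissipation inequality holds: D(P_t ‖ P_*) ≤ D(Φ ‖ P_*) + ∫_𝒳 D(κ(x) ‖ R^{⊗t}) dΦ(x), with all quantities valued in [0,∞]. -/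
open MeasureTheory ProbabilityTheory
open scoped ENNReal ProbabilityTheory Classical

/-- Kullback-Leibler divergence `D(P ‖ Q)`, valued in `[0,∞]`.  For probability measures with
`P ≪ Q` it equals `∫ log (dP/dQ) dP`, computed here in the equivalent nonnegative form
`∫⁻ (φ log φ - φ + 1) dQ` where `φ = dP/dQ`; it is `∞` when `¬ P ≪ Q`. -/
noncomputable def klDiv {α : Type*} [MeasurableSpace α] (P Q : Measure α) : ℝ≥0∞ :=
  if P ≪ Q then
    ∫⁻ x, ENNReal.ofReal ((P.rnDeriv Q x).toReal * Real.log (P.rnDeriv Q x).toReal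
      - (P.rnDeriv Q x).toReal + 1) ∂Q
  else ∞

/-- The `t`-step state transition maps: `F 0 (x, _) = x` and
`F (k+1) (x, w₀, …, w_k) = f (F k (x, w₀, …, w_{k-1}), w_k)`. -/
def stateTrans {𝒳 𝒲 : Type*} (f : 𝒳 × 𝒲 → 𝒳) : (t : ℕ) → 𝒳 × (Fin t → 𝒲) → 𝒳
  | 0, p => p.1
  | t + 1, p => f (stateTrans f t (p.1, fun i => p.2 i.castSucc), p.2 (Fin.last t))

lemma klDiv_eq_std {α : Type*} [MeasurableSpace α] (P Q : Measure α) [IsFiniteMeasure P]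
    [IsFiniteMeasure Q] : klDiv P Q = InformationTheory.klDiv P Q := by
  rw [InformationTheory.klDiv_eq_lintegral_klFun, klDiv]
  split_ifs with h
  · refine lintegral_congr fun x => ?_
    rw [InformationTheory.klFun_apply]
    congr 1
    ring
  · rfl

lemma klDiv_compProd_right_eq {α β : Type*} [MeasurableSpace α] [MeasurableSpace β]
    [MeasurableSpace.CountableOrCountablyGenerated α β]
    (μ : Measure α) [IsFiniteMeasure μ] (κ η : Kernel α β) [IsMarkovKernel κ] [IsMarkovKernel η]
    (h : ∀ᵐ x ∂μ, κ x ≪ η x) :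
    InformationTheory.klDiv (μ ⊗ₘ κ) (μ ⊗ₘ η)
      = ∫⁻ x, InformationTheory.klDiv (κ x) (η x) ∂μ := by
  have hac : μ ⊗ₘ κ ≪ μ ⊗ₘ η := Measure.AbsolutelyContinuous.compProd_right h
  have hg : Measurable (fun p : α × β => κ.rnDeriv η p.1 p.2) := Kernel.measurable_rnDeriv κ η
  have hd : (μ ⊗ₘ η).withDensity (fun p : α × β => κ.rnDeriv η p.1 p.2) = μ ⊗ₘ κ := by
    ext s hs
    rw [withDensity_apply _ hs, ← lintegral_indicator hs,
      Measure.lintegral_compProd (hg.indicator hs), Measure.compProd_apply hs]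
    refine lintegral_congr_ae ?_
    filter_upwards [h] with a ha
    have hs' : MeasurableSet (Prod.mk a ⁻¹' s) := hs.preimage (by fun_prop)
    rw [← Measure.setLIntegral_rnDeriv ha, ← lintegral_indicator hs']
    refine lintegral_congr_ae ?_
    filter_upwards [Kernel.rnDeriv_eq_rnDeriv_measure (κ := κ) (η := η) (a := a)] with b hb
    simp only [Set.indicator, Set.mem_preimage, hb]
  have hr : (μ ⊗ₘ κ).rnDeriv (μ ⊗ₘ η) =ᵐ[μ ⊗ₘ η] fun p => κ.rnDeriv η p.1 p.2 := by
    rw [← hd]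
    exact Measure.rnDeriv_withDensity _ hg
  rw [InformationTheory.klDiv_eq_lintegral_klFun_of_ac hac]
  have : ∫⁻ p, ENNReal.ofReal (InformationTheory.klFun ((μ ⊗ₘ κ).rnDeriv (μ ⊗ₘ η) p).toReal)
      ∂(μ ⊗ₘ η) = ∫⁻ p, ENNReal.ofReal (InformationTheory.klFun (κ.rnDeriv η p.1 p.2).toReal)
      ∂(μ ⊗ₘ η) := by
    refine lintegral_congr_ae ?_
    filter_upwards [hr] with p hp
    rw [hp]
  have hm : Measurable (fun p : α × β =>
      ENNReal.ofReal (InformationTheory.klFun (κ.rnDeriv η p.1 p.2).toReal)) :=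
    (InformationTheory.measurable_klFun.comp hg.ennreal_toReal).ennreal_ofReal
  rw [this, Measure.lintegral_compProd hm]
  refine lintegral_congr_ae ?_
  filter_upwards [h] with a ha
  rw [InformationTheory.klDiv_eq_lintegral_klFun_of_ac ha]
  refine lintegral_congr_ae ?_
  filter_upwards [Kernel.rnDeriv_eq_rnDeriv_measure (κ := κ) (η := η) (a := a)] with b hb
  simp only [hb]

lemma measurePreserving_stateTrans {𝒳 𝒲 : Type*} [MeasurableSpace 𝒳] [MeasurableSpace 𝒲]
    (R : Measure 𝒲) [IsProbabilityMeasure R] (f : 𝒳 × 𝒲 → 𝒳) (hf : Measurable f)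
    (P : Measure 𝒳) [IsProbabilityMeasure P] (hinv : (P.prod R).map f = P) (t : ℕ) :
    MeasurePreserving (stateTrans f t) (P.prod (Measure.pi fun _ : Fin t => R)) P := by
  induction t with
  | zero => exact measurePreserving_fst
  | succ t ih =>
    have h1 := (MeasurePreserving.id P).prod
      (Measure.measurePreserving_swap.comp
        (measurePreserving_piFinSuccAbove (fun _ : Fin (t + 1) => R) (Fin.last t)))
    have h2 := (measurePreserving_prodAssoc P (Measure.pi fun _ : Fin t => R) R).symm
    have h3 := ih.prod (MeasurePreserving.id R)
    have h4 : MeasurePreserving f (P.prod R) P := ⟨hf, hinv⟩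
    have h5 := h4.comp (h3.comp (h2.comp h1))
    convert h5 using 1
    funext p
    simp [stateTrans, MeasurableEquiv.piFinSuccAbove, MeasurableEquiv.prodAssoc,
      Fin.insertNthEquiv]
    rfl

/-- Relative entropy dissipation inequality:
`D(P_t ‖ P_*) ≤ D(Φ ‖ P_*) + ∫ D(κ(x) ‖ R^{⊗t}) dΦ(x)`. -/
theorem dissipation_inequality
    {𝒳 𝒲 : Type*} [MeasurableSpace 𝒳] [StandardBorelSpace 𝒳]
    [MeasurableSpace 𝒲] [StandardBorelSpace 𝒲]
    (R : Measure 𝒲) [IsProbabilityMeasure R]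
    (f : 𝒳 × 𝒲 → 𝒳) (hf : Measurable f)
    (Pstar : Measure 𝒳) [IsProbabilityMeasure Pstar]
    (hinv : (Pstar.prod R).map f = Pstar)
    (t : ℕ)
    (Φ : Measure 𝒳) [IsProbabilityMeasure Φ] (hΦ : Φ ≪ Pstar)
    (κ : Kernel 𝒳 (Fin t → 𝒲)) [IsMarkovKernel κ]
    (hκ : ∀ᵐ x ∂Φ, κ x ≪ Measure.pi fun _ => R) :
    klDiv ((Φ ⊗ₘ κ).map (stateTrans f t)) Pstar
      ≤ klDiv Φ Pstar + ∫⁻ x, klDiv (κ x) (Measure.pi fun _ => R) ∂Φ := by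
  have hmp := measurePreserving_stateTrans R f hf Pstar hinv t
  have : IsProbabilityMeasure ((Φ ⊗ₘ κ).map (stateTrans f t)) :=
    Measure.isProbabilityMeasure_map hmp.measurable.aemeasurable
  simp only [klDiv_eq_std]
  calc InformationTheory.klDiv ((Φ ⊗ₘ κ).map (stateTrans f t)) Pstar
      = InformationTheory.klDiv ((Φ ⊗ₘ κ).map (stateTrans f t))
          ((Pstar ⊗ₘ Kernel.const 𝒳 (Measure.pi fun _ : Fin t => R)).map (stateTrans f t)) := by
        rw [Measure.compProd_const, hmp.map_eq]
    _ ≤ InformationTheory.klDiv (Φ ⊗ₘ κ)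
          (Pstar ⊗ₘ Kernel.const 𝒳 (Measure.pi fun _ : Fin t => R)) :=
        InformationTheory.klDiv_map_le _ _ hmp.measurable
    _ = _ := by
        rw [InformationTheory.klDiv_compProd_eq_add, klDiv_compProd_right_eq Φ κ _
          (by simpa using hκ)]
        simp only [Kernel.const_apply]
end

section
/- Let 𝒳 and 𝒲 be standard Borel spaces, R a probability measure on 𝒲, f : 𝒳 × 𝒲 → 𝒳 measurable with t-step transition maps F_t, and P_* a nominal invariant state distribution ((P_* × R) ∘ f⁻¹ = P_*). For t ≥ 1 and probability measures Φ, Ψ on 𝒳, define J_t(Φ, Ψ) := inf { ∫_𝒳 D(κ(x) ‖ R^{⊗t}) dΦ(x) : κ a Markov kernel from 𝒳 to 𝒲^t with κ(x) ≪ R^{⊗t} for Φ-a.e. x and (Φ ⊗ κ) ∘ F_t⁻¹ = Ψ }, valued in [0,∞]. Then for every probability measure Ψ on 𝒳 and every t ≥ 1, the minimum supply required to reach Ψ from the nominal invariant distribution is nonincreasing in the time horizon: J_{t+1}(P_*, Ψ) ≤ J_t(P_*, Ψ). -/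
open MeasureTheory ProbabilityTheory
open scoped ENNReal ProbabilityTheory Classical

/-- The minimum required conditional relative entropy supply to drive the state distribution
from `Φ` to `Ψ` under the transition map `F : 𝒳 × 𝒱 → 𝒳` (for `J_t` take `𝒱 = 𝒲^t`,
`F = F_t` and `Rt = R^{⊗t}`): the infimum over all Markov kernels `κ` with `κ x ≪ Rt` for
`Φ`-a.e. `x` and `(Φ ⊗ κ) ∘ F⁻¹ = Ψ` of `∫ D(κ(x) ‖ Rt) dΦ(x)`, with `inf ∅ = ∞`. -/
noncomputable def reqSupply {𝒳 𝒱 : Type*} [MeasurableSpace 𝒳] [MeasurableSpace 𝒱]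
    (F : 𝒳 × 𝒱 → 𝒳) (Rt : Measure 𝒱) (Φ Ψ : Measure 𝒳) : ℝ≥0∞ :=
  ⨅ (κ : Kernel 𝒳 𝒱) (_ : IsMarkovKernel κ) (_ : ∀ᵐ x ∂Φ, κ x ≪ Rt)
    (_ : (Φ ⊗ₘ κ).map F = Ψ), ∫⁻ x, klDiv (κ x) Rt ∂Φ

/-- The integrand of the divergence, as a function of the density. -/
noncomputable def phiKL (a : ℝ≥0∞) : ℝ≥0∞ :=
  ENNReal.ofReal (a.toReal * Real.log a.toReal - a.toReal + 1)

lemma measurable_phiKL : Measurable phiKL := by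
  unfold phiKL
  fun_prop

lemma klDiv_withDensity {α : Type*} [MeasurableSpace α] (Q : Measure α) [SigmaFinite Q]
    (g : α → ℝ≥0∞) (hg : Measurable g) :
    klDiv (Q.withDensity g) Q = ∫⁻ x, phiKL (g x) ∂Q := by
  unfold klDiv
  rw [if_pos (withDensity_absolutelyContinuous Q g)]
  refine lintegral_congr_ae ?_
  filter_upwards [Measure.rnDeriv_withDensity Q hg] with x hx
  rw [hx, phiKL]

lemma measurable_stateTrans {𝒳 𝒲 : Type*} [MeasurableSpace 𝒳] [MeasurableSpace 𝒲]
    {f : 𝒳 × 𝒲 → 𝒳} (hf : Measurable f) (t : ℕ) : Measurable (stateTrans f t) := by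
  induction t with
  | zero => exact measurable_fst
  | succ t ih =>
    change Measurable fun p : 𝒳 × (Fin (t + 1) → 𝒲) =>
      f (stateTrans f t (p.1, fun i => p.2 i.castSucc), p.2 (Fin.last t))
    fun_prop

lemma stateTrans_cons {𝒳 𝒲 : Type*} (f : 𝒳 × 𝒲 → 𝒳) (t : ℕ) (x : 𝒳) (w : 𝒲)
    (v : Fin t → 𝒲) :
    stateTrans f (t + 1) (x, Fin.cons w v) = stateTrans f t (f (x, w), v) := by
  induction t with
  | zero => simp [stateTrans]
  | succ t ih =>
    rw [stateTrans]
    have h : (fun i : Fin (t + 1) => (Fin.cons w v : Fin (t + 2) → 𝒲) i.castSucc)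
        = Fin.cons w (fun i : Fin t => v i.castSucc) := by
      funext i
      refine Fin.cases ?_ (fun j => ?_) i
      · simp
      · simp
    simp only [h, ih]
    rw [stateTrans]
    simp [← Fin.succ_last]

/-- Prepending a coordinate. -/
def consMap (𝒲 : Type*) (t : ℕ) (p : 𝒲 × (Fin t → 𝒲)) : Fin (t + 1) → 𝒲 := Fin.cons p.1 p.2

lemma measurePreserving_consMap {𝒲 : Type*} [MeasurableSpace 𝒲] (R : Measure 𝒲)
    [IsProbabilityMeasure R] (t : ℕ) :
    MeasurePreserving (consMap 𝒲 t) (R.prod (Measure.pi fun _ : Fin t => R))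
      (Measure.pi fun _ : Fin (t + 1) => R) := by
  have h := (measurePreserving_piFinSuccAbove (fun _ : Fin (t + 1) => R) 0).symm
  convert h using 1
  funext p
  simp [consMap, MeasurableEquiv.piFinSuccAbove, Fin.insertNthEquiv]

/-- The kernel that first draws nominal noise and then applies `κ` at the next state. -/
noncomputable def extKernel {𝒳 𝒲 : Type*} [MeasurableSpace 𝒳] [MeasurableSpace 𝒲]
    (R : Measure 𝒲) (f : 𝒳 × 𝒲 → 𝒳) (hf : Measurable f) (t : ℕ)
    (κ : Kernel 𝒳 (Fin t → 𝒲)) : Kernel 𝒳 (Fin (t + 1) → 𝒲) :=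
  ((Kernel.const 𝒳 R) ⊗ₖ (κ.comap f hf)).map (consMap 𝒲 t)

lemma lintegral_extKernel {𝒳 𝒲 : Type*} [MeasurableSpace 𝒳] [MeasurableSpace 𝒲]
    (R : Measure 𝒲) [IsProbabilityMeasure R] (f : 𝒳 × 𝒲 → 𝒳) (hf : Measurable f) (t : ℕ)
    (κ : Kernel 𝒳 (Fin t → 𝒲)) [IsMarkovKernel κ] (x : 𝒳)
    (h : (Fin (t + 1) → 𝒲) → ℝ≥0∞) (hh : Measurable h) :
    ∫⁻ v, h v ∂(extKernel R f hf t κ x)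
      = ∫⁻ w, ∫⁻ v, h (consMap 𝒲 t (w, v)) ∂(κ (f (x, w))) ∂(R) := by
  have hc := (measurePreserving_consMap R t).measurable
  have hhc : Measurable fun p => h (consMap 𝒲 t p) := hh.comp hc
  rw [extKernel, Kernel.lintegral_map _ hc _ hh, Kernel.lintegral_compProd _ _ _ hhc]
  simp [Kernel.comap_apply]

/-- The minimum supply required to drive the system from the nominal invariant state
distribution `P_*` to `Ψ` is nonincreasing in the time horizon:
`J_{t+1}(P_*, Ψ) ≤ J_t(P_*, Ψ)`. -/
theorem reqSupply_antitone_from_invariant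
    {𝒳 𝒲 : Type*} [MeasurableSpace 𝒳] [StandardBorelSpace 𝒳]
    [MeasurableSpace 𝒲] [StandardBorelSpace 𝒲]
    (R : Measure 𝒲) [IsProbabilityMeasure R]
    (f : 𝒳 × 𝒲 → 𝒳) (hf : Measurable f)
    (Pstar : Measure 𝒳) [IsProbabilityMeasure Pstar]
    (hinv : (Pstar.prod R).map f = Pstar)
    (t : ℕ) (ht : 1 ≤ t)
    (Ψ : Measure 𝒳) [IsProbabilityMeasure Ψ] :
    reqSupply (stateTrans f (t + 1)) (Measure.pi fun _ : Fin (t + 1) => R) Pstar Ψ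
      ≤ reqSupply (stateTrans f t) (Measure.pi fun _ : Fin t => R) Pstar Ψ := by
  unfold reqSupply
  refine le_iInf fun κ => le_iInf fun hκ => le_iInf fun hac => le_iInf fun hmap => ?_
  have hc := (measurePreserving_consMap R t).measurable
  have hM : IsMarkovKernel (extKernel R f hf t κ) := by
    unfold extKernel
    exact Kernel.IsMarkovKernel.map _ hc
  set Q : Measure (Fin t → 𝒲) := Measure.pi fun _ : Fin t => R with hQ
  set η : Kernel 𝒳 (Fin t → 𝒲) := Kernel.const 𝒳 Q with hη
  let g : 𝒳 → (Fin t → 𝒲) → ℝ≥0∞ := Kernel.rnDeriv κ η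
  have hg : Measurable (fun p : 𝒳 × (Fin t → 𝒲) => g p.1 p.2) := Kernel.measurable_rnDeriv κ η
  have hgd : ∀ᵐ y ∂Pstar, κ y = Q.withDensity (g y) := by
    filter_upwards [hac] with y hy
    have h1 : g y =ᵐ[Q] (κ y).rnDeriv Q := by
      have := Kernel.rnDeriv_eq_rnDeriv_measure (κ := κ) (η := η) (a := y)
      simpa [hη] using this
    rw [withDensity_congr_ae h1, Measure.withDensity_rnDeriv_eq _ _ hy]
  have hgd2 : ∀ᵐ x ∂Pstar, ∀ᵐ w ∂(R), κ (f (x, w)) = Q.withDensity (g (f (x, w))) := by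
    have h1 : ∀ᵐ p ∂(Pstar.prod R), κ (f p) = Q.withDensity (g (f p)) := by
      refine ae_of_ae_map (p := fun y => κ y = Q.withDensity (g y)) hf.aemeasurable ?_
      rw [hinv]
      exact hgd
    exact Measure.ae_ae_of_ae_prod h1
  let G : 𝒳 → (Fin (t + 1) → 𝒲) → ℝ≥0∞ := fun x v => g (f (x, v 0)) (fun i => v i.succ)
  have hG : ∀ x, Measurable (G x) := fun x => by
    have : Measurable (fun v : Fin (t + 1) → 𝒲 =>
      ((f (x, v 0), fun i => v i.succ) : 𝒳 × (Fin t → 𝒲))) := by fun_prop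
    exact hg.comp this
  have hGc : ∀ x w v, G x (consMap 𝒲 t (w, v)) = g (f (x, w)) v := fun x w v => by
    simp [G, consMap]
  have hden : ∀ᵐ x ∂Pstar, extKernel R f hf t κ x
      = (Measure.pi fun _ : Fin (t + 1) => R).withDensity (G x) := by
    filter_upwards [hgd2] with x hx
    refine Measure.ext_of_lintegral _ fun h hh => ?_
    have hGh : Measurable fun p => (G x * h) (consMap 𝒲 t p) := ((hG x).mul hh).comp hc
    rw [lintegral_extKernel _ _ _ _ _ _ _ hh, lintegral_withDensity_eq_lintegral_mul _ (hG x) hh,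
      ← (measurePreserving_consMap R t).lintegral_comp ((hG x).mul hh),
      lintegral_prod _ hGh.aemeasurable]
    refine lintegral_congr_ae ?_
    filter_upwards [hx] with w hw
    have hgw : Measurable (g (f (x, w))) := hg.comp measurable_prodMk_left
    have hhw : Measurable fun v => h (consMap 𝒲 t (w, v)) :=
      (hh.comp hc).comp measurable_prodMk_left
    rw [hw, lintegral_withDensity_eq_lintegral_mul _ hgw hhw]
    simp [hGc, hQ]
  refine iInf_le_of_le (extKernel R f hf t κ) (iInf_le_of_le hM
    (iInf_le_of_le ?_ (iInf_le_of_le ?_ ?_)))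
  · filter_upwards [hden] with x hx
    rw [hx]
    exact withDensity_absolutelyContinuous _ _
  · have hF := measurable_stateTrans hf t
    have hF1 := measurable_stateTrans hf (t + 1)
    rw [← hmap]
    refine Measure.ext_of_lintegral _ fun h hh => ?_
    have hhF : Measurable fun p => h (stateTrans f t p) := hh.comp hF
    have hhF1 : Measurable fun p => h (stateTrans f (t + 1) p) := hh.comp hF1
    rw [lintegral_map hh hF1, lintegral_map hh hF, Measure.lintegral_compProd hhF1,
      Measure.lintegral_compProd hhF]
    have hm : Measurable fun y => ∫⁻ v, h (stateTrans f t (y, v)) ∂(κ y) :=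
      (hh.comp hF).lintegral_kernel_prod_right'
    conv_rhs => rw [← hinv]
    rw [lintegral_map hm hf, lintegral_prod]
    swap
    · exact (hm.comp hf).aemeasurable
    refine lintegral_congr fun x => ?_
    have hx1 : Measurable fun v => h (stateTrans f (t + 1) (x, v)) :=
      hhF1.comp measurable_prodMk_left
    rw [lintegral_extKernel _ _ _ _ _ _ _ hx1]
    simp only [consMap, stateTrans_cons]
  · have hm : Measurable fun y => ∫⁻ v, phiKL (g y v) ∂Q :=
      (measurable_phiKL.comp hg).lintegral_prod_right'
    have e1 : ∫⁻ y, klDiv (κ y) Q ∂Pstar = ∫⁻ y, ∫⁻ v, phiKL (g y v) ∂Q ∂Pstar := by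
      refine lintegral_congr_ae ?_
      filter_upwards [hgd] with y hy
      have hgy : Measurable (g y) := hg.comp measurable_prodMk_left
      rw [hy, klDiv_withDensity _ _ hgy]
    rw [e1]
    conv_rhs => rw [← hinv]
    rw [lintegral_map hm hf, lintegral_prod]
    swap
    · exact (hm.comp hf).aemeasurable
    refine le_of_eq (lintegral_congr_ae ?_)
    filter_upwards [hden] with x hx
    have hpG := measurable_phiKL.comp (hG x)
    rw [hx, klDiv_withDensity _ _ (hG x)]
    have e2 := (measurePreserving_consMap R t).lintegral_comp hpG
    simp only [Function.comp_apply] at e2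
    rw [← e2, lintegral_prod]
    swap
    · exact (hpG.comp hc).aemeasurable
    simp only [hGc, hQ]
end

section
/- Consider the linear system X_{k+1} = A X_k + B W_k on ℝⁿ with noise values in ℝ^m, where A ∈ ℝ^{n×n} and B ∈ ℝ^{n×m}, and nominal noise marginal R := N(0, I_m). Fix a time horizon t ≥ n. Then the following are equivalent: (i) the pair (A, B) is reachable, i.e. the matrix [B, AB, …, A^{n-1}B] has rank n; (ii) for every α, β ∈ ℝⁿ and every pair of positive definite symmetric matrices Σ, Θ ∈ ℝ^{n×n}, there exists a Gaussian probability measure Q on ℝⁿ × (ℝ^m)^t whose marginal on the first factor is N(α, Σ), such that Q ≪ N(α, Σ) × (N(0, I_m))^{⊗t}, and such that the pushforward of Q under the t-step transition map (x, w_0, …, w_{t-1}) ↦ A^t x + Σ_{s=0}^{t-1} A^{t-1-s} B w_s equals N(β, Θ). -/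
open MeasureTheory ProbabilityTheory Matrix
open scoped ENNReal ProbabilityTheory Classical

/-- The Gaussian (multivariate normal) measure `N(a, C)` on `ℝ^r`, with mean vector `a` and
positive definite covariance matrix `C`, given by its density
`(2π)^{-r/2} (det C)^{-1/2} exp(-½ (x-a)ᵀ C⁻¹ (x-a))` with respect to Lebesgue measure. -/
noncomputable def gaussianPi {r : ℕ} (a : Fin r → ℝ) (C : Matrix (Fin r) (Fin r) ℝ) :
    Measure (Fin r → ℝ) :=
  volume.withDensity fun x =>
    ENNReal.ofReal (Real.sqrt (((2 * Real.pi) ^ r * C.det)⁻¹) *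
      Real.exp (-(1 / 2) * ((x - a) ⬝ᵥ (C⁻¹ *ᵥ (x - a)))))

/-- The pair `(A, B)` is reachable: the controllability matrix
`[B, AB, …, A^{n-1}B]` has rank `n`. -/
def IsReachablePair {n m : ℕ} (A : Matrix (Fin n) (Fin n) ℝ)
    (B : Matrix (Fin n) (Fin m) ℝ) : Prop :=
  (Matrix.of fun (i : Fin n) (p : Fin n × Fin m) => (A ^ (p.1 : ℕ) * B) i p.2).rank = n

/-- A measure on a real normed space is Gaussian if every continuous linear functional pushes it
forward to a (possibly degenerate) one-dimensional normal distribution. -/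
def IsGaussianMeasure {E : Type*} [NormedAddCommGroup E] [NormedSpace ℝ E] [MeasurableSpace E]
    (μ : Measure E) : Prop :=
  ∀ L : E →L[ℝ] ℝ, ∃ (c : ℝ) (v : NNReal), μ.map L = gaussianReal c v

theorem lintegral_pi_prod_aux {n : ℕ} {E : Fin n → Type*}
    {mE : ∀ i, MeasurableSpace (E i)} {μ : (i : Fin n) → Measure (E i)} [∀ i, SigmaFinite (μ i)]
    {f : (i : Fin n) → E i → ℝ≥0∞} (hf : ∀ i, Measurable (f i)) :
    ∫⁻ x, ∏ i, f i (x i) ∂(Measure.pi μ) = ∏ i, ∫⁻ x, f i x ∂(μ i) := by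
  induction n with
  | zero => simp
  | succ n ih =>
    have h := (measurePreserving_piFinSuccAbove μ 0).symm
    rw [← h.lintegral_comp_emb (MeasurableEquiv.measurableEmbedding _)]
    simp_rw [MeasurableEquiv.piFinSuccAbove_symm_apply, Fin.insertNthEquiv,
        Fin.prod_univ_succ, Fin.insertNth_zero]
    simp only [Fin.zero_succAbove]
    rw [← ih (fun i => hf i.succ)]
    have hm : Measurable (fun (x : (j : Fin n) → E (Fin.succ j)) ↦ ∏ j, f (Fin.succ j) (x j)) :=
      Finset.measurable_prod _ fun i _ => (hf i.succ).comp (measurable_pi_apply i)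
    exact lintegral_prod_mul (μ := μ 0) (ν := Measure.pi fun j : Fin n => μ j.succ)
      (hf 0).aemeasurable hm.aemeasurable

theorem pi_withDensity_aux {n : ℕ} {E : Fin n → Type*}
    {mE : ∀ i, MeasurableSpace (E i)} {μ : (i : Fin n) → Measure (E i)} [∀ i, SigmaFinite (μ i)]
    {f : (i : Fin n) → E i → ℝ≥0∞} (hf : ∀ i, Measurable (f i))
    [∀ i, SigmaFinite ((μ i).withDensity (f i))] :
    Measure.pi (fun i => (μ i).withDensity (f i)) =
      (Measure.pi μ).withDensity (fun x => ∏ i, f i (x i)) := by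
  refine Measure.pi_eq fun s hs => ?_
  rw [withDensity_apply _ (MeasurableSet.univ_pi hs), Measure.restrict_pi_pi,
    lintegral_pi_prod_aux hf]
  exact Finset.prod_congr rfl fun i _ => (withDensity_apply _ (hs i)).symm

theorem gaussianPi_std {r : ℕ} :
    gaussianPi (0 : Fin r → ℝ) 1 = Measure.pi (fun _ : Fin r => gaussianReal 0 1) := by
  have h : gaussianReal 0 1 = volume.withDensity (gaussianPDF 0 1) := by
    rw [gaussianReal_of_var_ne_zero _ one_ne_zero]
  have hs : SigmaFinite ((volume : Measure ℝ).withDensity (gaussianPDF 0 1)) := by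
    rw [← h]; infer_instance
  rw [h, pi_withDensity_aux (fun _ => measurable_gaussianPDF 0 1), gaussianPi, volume_pi]
  congr 1
  ext x
  simp only [gaussianPDF, gaussianPDFReal]
  rw [← ENNReal.ofReal_prod_of_nonneg (fun i _ => by positivity), Finset.prod_mul_distrib,
    ← Real.exp_sum]
  congr 2
  · have h2 : Real.sqrt ((2 * Real.pi) ^ r) = (Real.sqrt (2 * Real.pi)) ^ r := by
      rw [Real.sqrt_eq_iff_eq_sq (by positivity) (by positivity), ← pow_mul, mul_comm r 2, pow_mul,
        Real.sq_sqrt (by positivity)]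
    rw [Matrix.det_one, mul_one, Real.sqrt_inv, h2]
    simp [Finset.prod_const, ← inv_pow, mul_comm]
  · simp only [sub_zero, inv_one, one_mulVec, dotProduct, Finset.mul_sum, NNReal.coe_one]
    congr 1
    refine Finset.sum_congr rfl fun i _ => by ring

theorem gaussianPi_eq_map {r : ℕ} (a : Fin r → ℝ) (M : Matrix (Fin r) (Fin r) ℝ) (hM : M.det ≠ 0) :
    gaussianPi a (M * Mᵀ) = (gaussianPi (0 : Fin r → ℝ) 1).map (fun x => M *ᵥ x + a) := by
  have hmeas : Measurable (fun x : Fin r → ℝ => M *ᵥ x + a) := by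
    have : Continuous (fun x : Fin r → ℝ => M *ᵥ x + a) := by fun_prop
    exact this.measurable
  have hvol : (volume : Measure (Fin r → ℝ)) =
      ENNReal.ofReal |M.det| • (volume : Measure (Fin r → ℝ)).map (fun x => M *ᵥ x + a) := by
    have h1 := Real.map_matrix_volume_pi_eq_smul_volume_pi hM
    have h2 : (fun x : Fin r → ℝ => M *ᵥ x + a) = (fun x => x + a) ∘ (toLin' M) := by
      ext; simp
    rw [h2, ← Measure.map_map (by fun_prop) (toLin' M).continuous_of_finiteDimensional.measurable,
      h1, Measure.map_smul, map_add_right_eq_self, smul_smul, ← ENNReal.ofReal_mul (abs_nonneg _),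
      ← abs_mul, mul_inv_cancel₀ hM]
    simp
  ext s hs
  rw [Measure.map_apply hmeas hs, gaussianPi, gaussianPi, withDensity_apply _ hs,
    withDensity_apply _ (hmeas hs)]
  conv_lhs => rw [hvol]
  have hf : Measurable (fun x : Fin r → ℝ => ENNReal.ofReal (Real.sqrt (((2 * Real.pi) ^ r * (M * Mᵀ).det)⁻¹) *
      Real.exp (-(1 / 2) * ((x - a) ⬝ᵥ ((M * Mᵀ)⁻¹ *ᵥ (x - a)))))) := by
    refine Continuous.measurable ?_
    refine ENNReal.continuous_ofReal.comp ?_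
    fun_prop
  rw [Measure.restrict_smul, lintegral_smul_measure, setLIntegral_map hs hf hmeas, smul_eq_mul,
    ← lintegral_const_mul _ (by exact hf.comp hmeas)]
  refine lintegral_congr fun x => ?_
  rw [← ENNReal.ofReal_mul (abs_nonneg _), ← mul_assoc]
  congr 2
  · rw [det_mul, det_transpose, Real.sqrt_inv, Real.sqrt_inv, Real.sqrt_mul (by positivity),
      Real.sqrt_mul_self_eq_abs]
    have : |M.det| ≠ 0 := abs_ne_zero.mpr hM
    simp
    field_simp
  · have hu : IsUnit M.det := hM.isUnit
    have hu' : IsUnit Mᵀ.det := by rwa [det_transpose]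
    simp only [add_sub_cancel_right, sub_zero, inv_one, one_mulVec, Matrix.mul_inv_rev]
    rw [mulVec_mulVec, Matrix.mul_assoc, Matrix.nonsing_inv_mul _ hu, Matrix.mul_one,
      ← transpose_nonsing_inv, dotProduct_mulVec, vecMul_transpose, mulVec_mulVec,
      Matrix.nonsing_inv_mul _ hu, one_mulVec]

open scoped MatrixOrder in
theorem posDef_factor {r : ℕ} {C : Matrix (Fin r) (Fin r) ℝ} (hC : C.PosDef) :
    ∃ M : Matrix (Fin r) (Fin r) ℝ, M.det ≠ 0 ∧ C = M * Mᵀ := by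
  have h : CFC.sqrt C * CFC.sqrt C = C := CFC.sqrt_mul_sqrt_self C hC.posSemidef.nonneg
  have h2 : (CFC.sqrt C)ᴴ = CFC.sqrt C := (CFC.sqrt_nonneg C).posSemidef.isHermitian
  rw [conjTranspose_eq_transpose_of_trivial] at h2
  refine ⟨CFC.sqrt C, ?_, by rw [h2, h]⟩
  intro h0
  have hd := hC.det_pos
  rw [← h, det_mul, h0] at hd
  simp at hd

theorem isGaussian_pi_aux {t : ℕ} {E : Fin t → Type*} [∀ i, NormedAddCommGroup (E i)]
    [∀ i, NormedSpace ℝ (E i)] [∀ i, MeasurableSpace (E i)] [∀ i, BorelSpace (E i)]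
    [∀ i, SecondCountableTopology (E i)] [∀ i, CompleteSpace (E i)]
    (μ : ∀ i, Measure (E i)) [∀ i, IsGaussian (μ i)] :
    IsGaussian (Measure.pi μ) := by
  have h := iIndepFun.hasGaussianLaw (P := Measure.pi μ) (X := fun i x => x i)
    (fun i => ⟨by
      have := (measurePreserving_eval μ i).map_eq
      change IsGaussian (Measure.map (Function.eval i) (Measure.pi μ))
      rw [this]; infer_instance⟩)
    (iIndepFun_pi (X := fun i => id) (fun i => aemeasurable_id))
  have := h.isGaussian_map
  simpa using this

theorem isGaussian_gaussianPi {r : ℕ} (a : Fin r → ℝ) {C : Matrix (Fin r) (Fin r) ℝ}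
    (hC : C.PosDef) : IsGaussian (gaussianPi a C) := by
  obtain ⟨M, hM, rfl⟩ := posDef_factor hC
  rw [gaussianPi_eq_map a M hM, gaussianPi_std]
  have := isGaussian_pi_aux (fun _ : Fin r => gaussianReal 0 1)
  have h2 : (fun x : Fin r → ℝ => M *ᵥ x + a) = (fun x => x + a) ∘ (toLin' M).toContinuousLinearMap := by
    ext; simp
  rw [h2, ← Measure.map_map (by fun_prop) (by fun_prop)]
  infer_instance

theorem measurable_gaussianPi_density {r : ℕ} (a : Fin r → ℝ) (C : Matrix (Fin r) (Fin r) ℝ) :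
    Measurable (fun x : Fin r → ℝ => ENNReal.ofReal (Real.sqrt (((2 * Real.pi) ^ r * C.det)⁻¹) *
      Real.exp (-(1 / 2) * ((x - a) ⬝ᵥ (C⁻¹ *ᵥ (x - a)))))) := by
  refine Continuous.measurable ?_
  refine ENNReal.continuous_ofReal.comp ?_
  fun_prop

theorem gaussianPi_density_ne_zero {r : ℕ} (a : Fin r → ℝ) {C : Matrix (Fin r) (Fin r) ℝ}
    (hC : C.PosDef) (x : Fin r → ℝ) :
    ENNReal.ofReal (Real.sqrt (((2 * Real.pi) ^ r * C.det)⁻¹) *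
      Real.exp (-(1 / 2) * ((x - a) ⬝ᵥ (C⁻¹ *ᵥ (x - a))))) ≠ 0 := by
  have := hC.det_pos
  have h : 0 < Real.sqrt (((2 * Real.pi) ^ r * C.det)⁻¹) *
      Real.exp (-(1 / 2) * ((x - a) ⬝ᵥ (C⁻¹ *ᵥ (x - a)))) := by positivity
  exact (ENNReal.ofReal_pos.mpr h).ne'

theorem gaussianPi_ac {r : ℕ} (a : Fin r → ℝ) (C : Matrix (Fin r) (Fin r) ℝ) :
    gaussianPi a C ≪ volume := withDensity_absolutelyContinuous _ _

theorem ac_gaussianPi {r : ℕ} (a : Fin r → ℝ) {C : Matrix (Fin r) (Fin r) ℝ} (hC : C.PosDef) :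
    volume ≪ gaussianPi a C :=
  withDensity_absolutelyContinuous' (measurable_gaussianPi_density a C).aemeasurable
    (Filter.Eventually.of_forall fun x => gaussianPi_density_ne_zero a hC x)

theorem pi_gaussianPi_eq (t m : ℕ) :
    (Measure.pi fun _ : Fin t => gaussianPi (0 : Fin m → ℝ) 1) =
    (volume : Measure (Fin t → Fin m → ℝ)).withDensity (fun x => ∏ i, ENNReal.ofReal
      (Real.sqrt (((2 * Real.pi) ^ m * (1 : Matrix (Fin m) (Fin m) ℝ).det)⁻¹) *
      Real.exp (-(1 / 2) * ((x i - 0) ⬝ᵥ ((1 : Matrix (Fin m) (Fin m) ℝ)⁻¹ *ᵥ (x i - 0)))))) := by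
  have h1 := isGaussian_gaussianPi (0 : Fin m → ℝ) Matrix.PosDef.one
  have h2 : SigmaFinite (gaussianPi (0 : Fin m → ℝ) 1) := inferInstance
  unfold gaussianPi at h2 ⊢
  rw [pi_withDensity_aux (fun _ => measurable_gaussianPi_density 0 1)]
  rfl

theorem pi_gaussianPi_ac (t m : ℕ) :
    (Measure.pi fun _ : Fin t => gaussianPi (0 : Fin m → ℝ) 1) ≪ volume := by
  rw [pi_gaussianPi_eq]; exact withDensity_absolutelyContinuous _ _

theorem ac_pi_gaussianPi (t m : ℕ) :
    volume ≪ (Measure.pi fun _ : Fin t => gaussianPi (0 : Fin m → ℝ) 1) := by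
  rw [pi_gaussianPi_eq]
  refine withDensity_absolutelyContinuous' (Measurable.aemeasurable ?_)
    (Filter.Eventually.of_forall fun x => Finset.prod_ne_zero_iff.mpr fun i _ =>
      gaussianPi_density_ne_zero 0 Matrix.PosDef.one (x i))
  exact Finset.measurable_prod _ fun i _ =>
    (measurable_gaussianPi_density 0 1).comp (measurable_pi_apply i)

theorem surjective_of_dual {n : ℕ} {V : Type*} [AddCommGroup V] [Module ℝ V]
    (L : V →ₗ[ℝ] (Fin n → ℝ)) (h : ∀ v : Fin n → ℝ, (∀ x, v ⬝ᵥ L x = 0) → v = 0) :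
    Function.Surjective L := by
  rw [← LinearMap.range_eq_top]
  by_contra hne
  obtain ⟨f, hf, hle⟩ := Submodule.exists_le_ker_of_lt_top _ (lt_top_iff_ne_top.mpr hne)
  apply hf
  have hrep : ∀ y, f y = (fun i => f (Pi.single i 1)) ⬝ᵥ y := by
    intro y
    rw [LinearMap.pi_apply_eq_sum_univ f y]
    simp only [dotProduct, smul_eq_mul]
    refine Finset.sum_congr rfl fun i _ => ?_
    rw [mul_comm]
    congr 2
    ext j
    simp [Pi.single_apply, eq_comm]
  have h0 := h (fun i => f (Pi.single i 1)) fun x => by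
    rw [← hrep]; exact hle ⟨x, rfl⟩
  ext i
  simpa using congrFun h0 i

theorem reachable_of_dual {n m : ℕ} {A : Matrix (Fin n) (Fin n) ℝ} {B : Matrix (Fin n) (Fin m) ℝ}
    (h : ∀ v : Fin n → ℝ, (∀ k < n, v ᵥ* (A ^ k * B) = 0) → v = 0) : IsReachablePair A B := by
  unfold IsReachablePair
  set C := (Matrix.of fun (i : Fin n) (p : Fin n × Fin m) => (A ^ (p.1 : ℕ) * B) i p.2) with hC
  have hs : Function.Surjective C.mulVecLin := surjective_of_dual _ fun v hv => h v fun k hk => by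
    ext j
    have := hv (Pi.single (⟨k, hk⟩, j) 1)
    rw [mulVecLin_apply, dotProduct_mulVec, dotProduct_single, mul_one] at this
    simpa [vecMul, dotProduct, hC] using this
  rw [Matrix.rank, LinearMap.range_eq_top.mpr hs]
  simp

theorem dual_of_reachable {n m : ℕ} {A : Matrix (Fin n) (Fin n) ℝ} {B : Matrix (Fin n) (Fin m) ℝ}
    (h : IsReachablePair A B) (v : Fin n → ℝ) (hv : ∀ k < n, v ᵥ* (A ^ k * B) = 0) : v = 0 := by
  unfold IsReachablePair at h
  set C := (Matrix.of fun (i : Fin n) (p : Fin n × Fin m) => (A ^ (p.1 : ℕ) * B) i p.2) with hC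
  have htop : LinearMap.range C.mulVecLin = ⊤ := by
    apply Submodule.eq_top_of_finrank_eq
    rw [← Matrix.rank, h]; simp
  obtain ⟨x, hx⟩ := LinearMap.range_eq_top.mp htop v
  have hz : v ᵥ* C = 0 := by
    ext p
    have := congrFun (hv p.1 p.1.2) p.2
    simpa [vecMul, dotProduct, hC] using this
  have : v ⬝ᵥ v = 0 := by
    conv_lhs => arg 2; rw [← hx, mulVecLin_apply]
    rw [dotProduct_mulVec, hz, zero_dotProduct]
  exact dotProduct_self_eq_zero.mp this

theorem kill_all {n m : ℕ} {A : Matrix (Fin n) (Fin n) ℝ} {B : Matrix (Fin n) (Fin m) ℝ}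
    {v : Fin n → ℝ} (hv : ∀ k < n, v ᵥ* (A ^ k * B) = 0) (k : ℕ) : v ᵥ* (A ^ k * B) = 0 := by
  rcases Nat.eq_zero_or_pos n with rfl | hn
  · have : v = 0 := Subsingleton.elim _ _
    rw [this, zero_vecMul]
  have : Nonempty (Fin n) := ⟨⟨0, hn⟩⟩
  rw [Matrix.pow_eq_aeval_mod_charpoly]
  have hd : (Polynomial.X ^ k %ₘ A.charpoly).natDegree < n := by
    have := Polynomial.natDegree_modByMonic_lt (Polynomial.X ^ k) A.charpoly_monic (by
      intro h
      have := A.charpoly_natDegree_eq_dim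
      rw [h] at this
      simp at this
      omega)
    rwa [A.charpoly_natDegree_eq_dim, Fintype.card_fin] at this
  rw [Polynomial.aeval_eq_sum_range' hd, Matrix.sum_mul, vecMul_sum]
  refine Finset.sum_eq_zero fun i hi => ?_
  rw [smul_mul, vecMul_smul, hv i (Finset.mem_range.mp hi), smul_zero]

/-- The noise-to-state map over the horizon `t`. -/
noncomputable def noiseMap {n m : ℕ} (A : Matrix (Fin n) (Fin n) ℝ) (B : Matrix (Fin n) (Fin m) ℝ)
    (t : ℕ) : (Fin t → Fin m → ℝ) →ₗ[ℝ] (Fin n → ℝ) :=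
  ∑ s : Fin t, ((A ^ (t - 1 - (s : ℕ)) * B).mulVecLin).comp (LinearMap.proj s)

theorem noiseMap_apply {n m : ℕ} (A : Matrix (Fin n) (Fin n) ℝ) (B : Matrix (Fin n) (Fin m) ℝ)
    (t : ℕ) (w : Fin t → Fin m → ℝ) :
    noiseMap A B t w = ∑ s : Fin t, ((A ^ (t - 1 - (s : ℕ))) * B) *ᵥ w s := by
  simp [noiseMap, LinearMap.sum_apply]

theorem noiseMap_surjective {n m : ℕ} {A : Matrix (Fin n) (Fin n) ℝ} {B : Matrix (Fin n) (Fin m) ℝ}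
    {t : ℕ} (ht : n ≤ t) (h : IsReachablePair A B) : Function.Surjective (noiseMap A B t) := by
  refine surjective_of_dual _ fun v hv => dual_of_reachable h v fun k hk => ?_
  ext j
  have hk' : t - 1 - k < t := by omega
  have := hv (Pi.single ⟨t - 1 - k, hk'⟩ (Pi.single j 1))
  rw [noiseMap_apply, Finset.sum_eq_single ⟨t - 1 - k, hk'⟩ (fun s _ hs => by
    rw [Pi.single_eq_of_ne hs, mulVec_zero]) (by simp), Pi.single_eq_same] at this
  have e : t - 1 - (t - 1 - k) = k := by omega
  simp only [e] at this
  rw [dotProduct_mulVec, dotProduct_single, mul_one] at this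
  simpa using this

theorem forward_dir {n m : ℕ} {A : Matrix (Fin n) (Fin n) ℝ} {B : Matrix (Fin n) (Fin m) ℝ}
    {t : ℕ} (ht : n ≤ t) (h : IsReachablePair A B)
    (α β : Fin n → ℝ) (Sig Th : Matrix (Fin n) (Fin n) ℝ) (hS : Sig.PosDef) (hT : Th.PosDef) :
    ∃ Q : Measure ((Fin n → ℝ) × (Fin t → Fin m → ℝ)),
          IsProbabilityMeasure Q ∧
          IsGaussianMeasure Q ∧
          Q.fst = gaussianPi α Sig ∧
          Q ≪ (gaussianPi α Sig).prod
            (Measure.pi fun _ : Fin t => gaussianPi (0 : Fin m → ℝ) 1) ∧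
          Q.map (fun p => (A ^ t) *ᵥ p.1
              + ∑ s : Fin t, ((A ^ (t - 1 - (s : ℕ))) * B) *ᵥ p.2 s)
            = gaussianPi β Th := by
  simp_rw [← noiseMap_apply]
  set G := noiseMap A B t
  obtain ⟨S, hGS⟩ := G.exists_rightInverse_of_surjective
    (LinearMap.range_eq_top.mpr (noiseMap_surjective ht h))
  have hGS' : ∀ y, G (S y) = y := fun y => LinearMap.congr_fun hGS y
  have g1 := isGaussian_gaussianPi α hS
  have g2 := isGaussian_gaussianPi β hT
  have g3 := isGaussian_gaussianPi (0 : Fin m → ℝ) Matrix.PosDef.one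
  have g4 := isGaussian_pi_aux (fun _ : Fin t => gaussianPi (0 : Fin m → ℝ) 1)
  set μ := gaussianPi α Sig
  set ν := gaussianPi β Th
  set ρ := Measure.pi fun _ : Fin t => gaussianPi (0 : Fin m → ℝ) 1
  let T : ((Fin n → ℝ) × ((Fin n → ℝ) × (Fin t → Fin m → ℝ))) →ₗ[ℝ]
      ((Fin n → ℝ) × (Fin t → Fin m → ℝ)) :=
    (LinearMap.fst ℝ _ _).prod
      (S.comp (LinearMap.fst ℝ _ _ ∘ₗ LinearMap.snd ℝ _ _
          - (A ^ t).mulVecLin ∘ₗ LinearMap.fst ℝ _ _)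
        + (LinearMap.id - S ∘ₗ G) ∘ₗ LinearMap.snd ℝ _ _ ∘ₗ LinearMap.snd ℝ _ _)
  have hTa : ∀ x y z, T (x, y, z) = (x, S (y - (A ^ t) *ᵥ x) + (z - S (G z))) := by
    intro x y z; simp [T]
  have hTs : Function.Surjective T := by
    rintro ⟨x, w⟩
    refine ⟨(x, (A ^ t) *ᵥ x + G w, w), ?_⟩
    rw [hTa]; simp
  have hTm : Measurable T := T.continuous_of_finiteDimensional.measurable
  have gQ : IsGaussian ((μ.prod (ν.prod ρ)).map T) :=
    isGaussian_map (μ := μ.prod (ν.prod ρ)) T.toContinuousLinearMap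
  refine ⟨(μ.prod (ν.prod ρ)).map T, inferInstance, ?_, ?_, ?_, ?_⟩
  · intro L
    exact ⟨_, _, gQ.map_eq_gaussianReal L⟩
  · rw [Measure.fst, Measure.map_map measurable_fst hTm]
    have : (Prod.fst ∘ T) = Prod.fst := by
      ext ⟨x, y, z⟩; simp [hTa]
    rw [this]
    exact Measure.fst_prod
  · have h1 : μ.prod (ν.prod ρ) ≪ volume :=
      (gaussianPi_ac α Sig).prod ((gaussianPi_ac β Th).prod (pi_gaussianPi_ac t m))
    have h2 : (volume : Measure ((Fin n → ℝ) × (Fin t → Fin m → ℝ))) ≪ μ.prod ρ :=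
      (ac_gaussianPi α hS).prod (ac_pi_gaussianPi t m)
    have i0 := isAddHaarMeasure_volume_pi (Fin n)
    have i0' := isAddHaarMeasure_volume_pi (Fin m)
    have i1 : (volume : Measure (Fin t → Fin m → ℝ)).IsAddHaarMeasure :=
      Measure.pi.isAddHaarMeasure _
    have i2 : (volume : Measure ((Fin n → ℝ) × (Fin t → Fin m → ℝ))).IsAddHaarMeasure :=
      Measure.prod.instIsAddHaarMeasure _ _
    have i3 : (volume : Measure ((Fin n → ℝ) × (Fin n → ℝ) × (Fin t → Fin m → ℝ))).IsAddHaarMeasure :=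
      Measure.prod.instIsAddHaarMeasure _ _
    obtain ⟨c, -, hc⟩ := T.exists_map_addHaar_eq_smul_addHaar volume volume hTs
    refine (h1.map hTm).trans (Measure.AbsolutelyContinuous.trans ?_ h2)
    rw [hc]
    exact Measure.smul_absolutelyContinuous
  · have hm : Measurable (fun p : (Fin n → ℝ) × (Fin t → Fin m → ℝ) => (A ^ t) *ᵥ p.1 + G p.2) := by
      have := G.continuous_of_finiteDimensional
      exact Continuous.measurable (by fun_prop)
    rw [Measure.map_map hm hTm]
    have : ((fun p : (Fin n → ℝ) × (Fin t → Fin m → ℝ) => (A ^ t) *ᵥ p.1 + G p.2) ∘ T)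
        = Prod.fst ∘ Prod.snd := by
      ext1 ⟨x, y, z⟩
      simp [hTa, hGS']
    rw [this, ← Measure.map_map measurable_fst measurable_snd]
    change (Measure.snd (μ.prod (ν.prod ρ))).fst = ν
    rw [Measure.snd_prod, Measure.fst_prod]

theorem gaussianPi_translate {n : ℕ} (v : Fin n → ℝ) :
    gaussianPi v (1 : Matrix (Fin n) (Fin n) ℝ) =
      (gaussianPi (0 : Fin n → ℝ) 1).map (fun x => x + v) := by
  have := gaussianPi_eq_map v (1 : Matrix (Fin n) (Fin n) ℝ) (by simp)
  simpa using this

theorem backward_dir {n m : ℕ} {A : Matrix (Fin n) (Fin n) ℝ} {B : Matrix (Fin n) (Fin m) ℝ}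
    {t : ℕ}
    (h : ∀ (α β : Fin n → ℝ) (Sig Th : Matrix (Fin n) (Fin n) ℝ),
        Sig.PosDef → Th.PosDef →
        ∃ Q : Measure ((Fin n → ℝ) × (Fin t → Fin m → ℝ)),
          IsProbabilityMeasure Q ∧
          IsGaussianMeasure Q ∧
          Q.fst = gaussianPi α Sig ∧
          Q ≪ (gaussianPi α Sig).prod
            (Measure.pi fun _ : Fin t => gaussianPi (0 : Fin m → ℝ) 1) ∧
          Q.map (fun p => (A ^ t) *ᵥ p.1
              + ∑ s : Fin t, ((A ^ (t - 1 - (s : ℕ))) * B) *ᵥ p.2 s)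
            = gaussianPi β Th) : IsReachablePair A B := by
  refine reachable_of_dual fun v hv => ?_
  have hk := kill_all hv
  have key : ∀ β : Fin n → ℝ, (gaussianPi β 1).map (fun x => v ⬝ᵥ x) =
      (gaussianPi (0 : Fin n → ℝ) 1).map (fun x => v ⬝ᵥ ((A ^ t) *ᵥ x)) := by
    intro β
    obtain ⟨Q, -, -, hfst, -, hQ⟩ := h 0 β 1 1 Matrix.PosDef.one Matrix.PosDef.one
    rw [← hQ, ← hfst, Measure.fst, Measure.map_map, Measure.map_map]
    · congr 1
      ext1 p
      simp only [Function.comp_apply, dotProduct_add, dotProduct_sum]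
      rw [Finset.sum_eq_zero, add_zero]
      intro s _
      rw [dotProduct_mulVec, hk, zero_dotProduct]
    · exact Continuous.measurable (by fun_prop)
    · exact measurable_fst
    · exact Continuous.measurable (by fun_prop)
    · exact Continuous.measurable (by fun_prop)
  have e : (gaussianPi v 1).map (fun x => v ⬝ᵥ x) = (gaussianPi (0 : Fin n → ℝ) 1).map (fun x => v ⬝ᵥ x) :=
    (key v).trans (key 0).symm
  have hcv : Continuous (fun x : Fin n → ℝ => v ⬝ᵥ x) := by fun_prop
  have g := isGaussian_gaussianPi (0 : Fin n → ℝ) Matrix.PosDef.one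
  rw [gaussianPi_translate, Measure.map_map hcv.measurable (by fun_prop)] at e
  have hint : Integrable (fun x : Fin n → ℝ => v ⬝ᵥ x) (gaussianPi (0 : Fin n → ℝ) 1) := by
    let L : (Fin n → ℝ) →ₗ[ℝ] ℝ :=
      { toFun := fun x => v ⬝ᵥ x
        map_add' := fun x y => dotProduct_add v x y
        map_smul' := fun c x => dotProduct_smul c v x }
    exact IsGaussian.integrable_dual (gaussianPi (0 : Fin n → ℝ) 1) L.toContinuousLinearMap
  have e2 := congrArg (fun μ : Measure ℝ => ∫ y, y ∂μ) e
  rw [integral_map (Continuous.aemeasurable (by fun_prop)) (by fun_prop),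
    integral_map (Continuous.aemeasurable (by fun_prop)) (by fun_prop)] at e2
  simp only [Function.comp_apply, dotProduct_add] at e2
  rw [integral_add hint (integrable_const _)] at e2
  simp at e2
  exact e2

/-- Reachability of Gaussian state distributions for the linear system
`X_{k+1} = A X_k + B W_k` with nominal noise `N(0, I_m)`, over a time horizon `t ≥ n`:
`(A, B)` is reachable iff every nonsingular Gaussian terminal state distribution `N(β, Θ)` can
be reached from every nonsingular Gaussian initial state distribution `N(α, Σ)` by an
admissible jointly Gaussian noise strategy. -/
theorem gaussian_state_distribution_reachability
    {n m : ℕ} (A : Matrix (Fin n) (Fin n) ℝ) (B : Matrix (Fin n) (Fin m) ℝ)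
    (t : ℕ) (ht : n ≤ t) :
    IsReachablePair A B ↔
      ∀ (α β : Fin n → ℝ) (Sig Th : Matrix (Fin n) (Fin n) ℝ),
        Sig.PosDef → Th.PosDef →
        ∃ Q : Measure ((Fin n → ℝ) × (Fin t → Fin m → ℝ)),
          IsProbabilityMeasure Q ∧
          IsGaussianMeasure Q ∧
          Q.fst = gaussianPi α Sig ∧
          Q ≪ (gaussianPi α Sig).prod
            (Measure.pi fun _ : Fin t => gaussianPi (0 : Fin m → ℝ) 1) ∧
          Q.map (fun p => (A ^ t) *ᵥ p.1
              + ∑ s : Fin t, ((A ^ (t - 1 - (s : ℕ))) * B) *ᵥ p.2 s)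
            = gaussianPi β Th := by
  exact ⟨fun h α β Sig Th hS hT => forward_dir ht h α β Sig Th hS hT, backward_dir⟩
end

section
/- Let U and V be real symmetric n×n matrices with U positive semidefinite and V positive definite. Then the algebraic Riccati equation Σ + Σ U Σ = V has a unique symmetric positive definite solution Σ, and this solution is given in closed form by Σ = 2 √V ( I_n + √( I_n + 4 √V U √V ) )⁻¹ √V, where √M denotes the unique positive semidefinite symmetric square root of a positive semidefinite symmetric matrix M. -/
open Matrix

open scoped MatrixOrder in
/-- The algebraic Riccati equation `Σ + Σ U Σ = V`, with `U` positive semidefinite and `V`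
positive definite, has a unique positive definite symmetric solution, given in closed form by
`Σ = 2 √V (I + √(I + 4 √V U √V))⁻¹ √V`.  Here `sV` is the (unique) positive semidefinite
symmetric square root of `V`, and `W` that of `I + 4 √V U √V`. -/
theorem riccati_closed_form
    {n : ℕ} (U V : Matrix (Fin n) (Fin n) ℝ) (hU : U.PosSemidef) (hV : V.PosDef)
    (sV : Matrix (Fin n) (Fin n) ℝ) (hsV : sV.PosSemidef ∧ sV * sV = V)
    (W : Matrix (Fin n) (Fin n) ℝ)
    (hW : W.PosSemidef ∧ W * W = 1 + (4 : ℝ) • (sV * U * sV)) :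
    (∃! S : Matrix (Fin n) (Fin n) ℝ, S.PosDef ∧ S + S * U * S = V) ∧
    ∀ S : Matrix (Fin n) (Fin n) ℝ, S.PosDef → S + S * U * S = V →
      S = (2 : ℝ) • (sV * (1 + W)⁻¹ * sV) := by
  obtain ⟨hs, hss⟩ := hsV
  obtain ⟨hWp, hWW⟩ := hW
  have hsu : IsUnit sV := by
    have h := hV.isUnit
    rw [← hss, Matrix.isUnit_iff_isUnit_det, Matrix.det_mul] at h
    rw [Matrix.isUnit_iff_isUnit_det]
    exact isUnit_of_mul_isUnit_left h
  have hsd : IsUnit sV.det := (Matrix.isUnit_iff_isUnit_det _).1 hsu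
  have hst : sV * sV⁻¹ = 1 := Matrix.mul_nonsing_inv _ hsd
  have hts : sV⁻¹ * sV = 1 := Matrix.nonsing_inv_mul _ hsd
  have hsH : sVᴴ = sV := hs.1
  have hKpos : (1 + W).PosDef := Matrix.PosDef.one.add_posSemidef hWp
  have hKd : IsUnit (1 + W).det := (Matrix.isUnit_iff_isUnit_det _).1 hKpos.isUnit
  have hM : (sV * U * sV).PosSemidef := by
    simpa only [hsH] using hU.mul_mul_conjTranspose_same sV
  have huniq : ∀ S : Matrix (Fin n) (Fin n) ℝ, S.PosDef → S + S * U * S = V →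
      S = (2 : ℝ) • (sV * (1 + W)⁻¹ * sV) := by
    intro S hS hSV
    have hSd : IsUnit S.det := (Matrix.isUnit_iff_isUnit_det _).1 hS.isUnit
    have hSi : S * S⁻¹ = 1 := Matrix.mul_nonsing_inv _ hSd
    have hiS : S⁻¹ * S = 1 := Matrix.nonsing_inv_mul _ hSd
    set P := S⁻¹ with hP
    set t := sV⁻¹ with ht
    set R := sV * P * sV with hR
    set T := t * S * t with hT
    have htH : tᴴ = t := by rw [ht, Matrix.conjTranspose_nonsing_inv, hsH]
    have hTpos : T.PosSemidef := by
      simpa only [htH] using hS.posSemidef.mul_mul_conjTranspose_same t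
    have hRT : R * T = 1 := by
      calc R * T = sV * P * (sV * t) * S * t := by simp only [hR, hT, mul_assoc]
        _ = sV * (P * S) * t := by rw [hst]; simp only [mul_assoc, one_mul]
        _ = 1 := by rw [hiS, mul_one, hst]
    have hTR : T * R = 1 := mul_eq_one_comm.1 hRT
    have hRR : R * R = R + sV * U * sV := by
      calc R * R = sV * P * (sV * sV) * P * sV := by simp only [hR, mul_assoc]
        _ = sV * ((P * S) * P + (P * S) * U * (S * P)) * sV := by
          rw [hss, ← hSV]; noncomm_ring
        _ = R + sV * U * sV := by rw [hSi, hiS, hR]; noncomm_ring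
    have hMR : sV * U * sV = R * R - R := by rw [hRR]; abel
    have hTM : T * (sV * U * sV) = R - 1 := by
      rw [hMR, mul_sub, ← mul_assoc, hTR, one_mul]
    have hMT : (sV * U * sV) * T = R - 1 := by
      rw [hMR, sub_mul, mul_assoc, hRT, mul_one]
    have hR1 : (R - 1).PosSemidef := by
      rw [← hTM]
      exact Matrix.nonneg_iff_posSemidef.1
        (Commute.mul_nonneg hTpos.nonneg hM.nonneg (hTM.trans hMT.symm))
    have h2R : (R - 1 + (R - 1) + 1).PosSemidef := (hR1.add hR1).add Matrix.PosSemidef.one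
    have hWR : W = R - 1 + (R - 1) + 1 := by
      refine (CFC.mul_self_eq_mul_self_iff W _ hWp.nonneg h2R.nonneg).1 ?_
      rw [hWW, hMR, ofNat_smul_eq_nsmul]
      noncomm_ring
    have hinv : (1 + W)⁻¹ = (1 / 2 : ℝ) • T := by
      apply Matrix.inv_eq_right_inv
      have : 1 + W = (2 : ℝ) • R := by rw [hWR, ofNat_smul_eq_nsmul]; noncomm_ring
      rw [this, smul_mul_smul_comm, hRT]; norm_num
    rw [hinv, mul_smul_comm, smul_mul_assoc, smul_smul]
    have : sV * T * sV = S := by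
      calc sV * T * sV = (sV * t) * S * (t * sV) := by simp only [hT, mul_assoc]
        _ = S := by rw [hst, hts, one_mul, mul_one]
    rw [this]; norm_num
  refine ⟨⟨(2 : ℝ) • (sV * (1 + W)⁻¹ * sV), ⟨?_, ?_⟩, fun S hS => huniq S hS.1 hS.2⟩, huniq⟩
  · refine Matrix.PosDef.smul ?_ (by norm_num)
    have := (Matrix.IsUnit.posDef_star_right_conjugate_iff (x := (1 + W)⁻¹) hsu).2 hKpos.inv
    simpa only [Matrix.star_eq_conjTranspose, hsH] using this
  · have h1 : (1 + W) * (1 + W)⁻¹ = 1 := Matrix.mul_nonsing_inv _ hKd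
    have h2 : (1 + W)⁻¹ * (1 + W) = 1 := Matrix.nonsing_inv_mul _ hKd
    set K := (1 + W)⁻¹ with hK
    have h4 : (4 : ℝ) • (sV * U * sV) = (1 + W) * (W - 1) := by
      rw [eq_sub_of_add_eq' hWW.symm]; noncomm_ring
    have h5 : (1 + W) * (W - 1) = (W - 1) * (1 + W) := by noncomm_ring
    calc (2 : ℝ) • (sV * K * sV) + (2 : ℝ) • (sV * K * sV) * U * (2 : ℝ) • (sV * K * sV)
        = (2 : ℝ) • (sV * K * sV) + sV * (K * ((4 : ℝ) • (sV * U * sV)) * K) * sV := by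
          simp only [smul_mul_assoc, mul_smul_comm, smul_smul, mul_assoc]
          norm_num
      _ = (2 : ℝ) • (sV * K * sV) + sV * ((K * (1 + W)) * (W - 1) * K) * sV := by
          rw [h4]; simp only [mul_assoc]
      _ = sV * ((1 + W) * K) * sV := by
          rw [h2, ofNat_smul_eq_nsmul]; noncomm_ring
      _ = V := by rw [h1, mul_one, hss]
end

section
/- Let U and V be real symmetric n×n matrices with U positive semidefinite and V positive definite, and let 𝛀 be the unique symmetric positive definite solution of the Riccati equation 𝛀 + 𝛀 U 𝛀 = V. Then tr(U + V) − tr √( I_n + 4 √V U √V ) − log det 𝛀 ≥ 0, where √M denotes the positive semidefinite symmetric square root; moreover, equality holds if and only if V = I_n + U (equivalently, if and only if 𝛀 = I_n). -/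
open Matrix

lemma aux_logdet {n : ℕ} (A : Matrix (Fin n) (Fin n) ℝ) (hA : A.PosDef) :
    0 ≤ A.trace - n - Real.log A.det ∧ (A.trace - n - Real.log A.det = 0 → A = 1) := by
  have hpos := fun i => hA.eigenvalues_pos i
  have hdet : A.det = ∏ i, hA.1.eigenvalues i := by
    have := hA.1.det_eq_prod_eigenvalues
    simpa using this
  have htr : A.trace = ∑ i, hA.1.eigenvalues i := by
    have := hA.1.trace_eq_sum_eigenvalues
    simpa using this
  have key : A.trace - n - Real.log A.det
      = ∑ i, (hA.1.eigenvalues i - 1 - Real.log (hA.1.eigenvalues i)) := by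
    rw [hdet, htr, Real.log_prod (fun i _ => (hpos i).ne')]
    simp [Finset.sum_sub_distrib]
  have hnn : ∀ i, 0 ≤ hA.1.eigenvalues i - 1 - Real.log (hA.1.eigenvalues i) := fun i => by
    linarith [Real.log_le_sub_one_of_pos (hpos i)]
  rw [key]
  refine ⟨Finset.sum_nonneg fun i _ => hnn i, fun h => ?_⟩
  rw [Finset.sum_eq_zero_iff_of_nonneg (fun i _ => hnn i)] at h
  have h1 : ∀ i, hA.1.eigenvalues i = 1 := fun i => by
    by_contra hne
    have := h i (Finset.mem_univ i)
    linarith [Real.log_lt_sub_one_of_pos (hpos i) hne]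
  have hs := hA.1.spectral_theorem
  have hd : (RCLike.ofReal ∘ hA.1.eigenvalues : Fin n → ℝ) = fun _ => 1 := by
    funext i; simp [h1 i]
  rw [hd, Matrix.diagonal_one, map_one] at hs
  exact hs

open scoped MatrixOrder Matrix.Norms.L2Operator in
lemma aux_sqrt_unique {n : ℕ} (A B : Matrix (Fin n) (Fin n) ℝ) (hA : A.PosSemidef)
    (hB : B.PosSemidef) (h : A * A = B * B) : A = B := by
  have hA' := Matrix.nonneg_iff_posSemidef.mpr hA
  have hB' := Matrix.nonneg_iff_posSemidef.mpr hB
  exact (CFC.sqrt_unique h hA').symm.trans (CFC.sqrt_unique (rfl : B * B = B * B) hB')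

lemma aux_conj {n : ℕ} (A B : Matrix (Fin n) (Fin n) ℝ) (hA : A.PosSemidef)
    (hB : B.IsHermitian) : (B * A * B).PosSemidef := by
  have := hA.mul_mul_conjTranspose_same B
  rwa [hB.eq] at this

open scoped MatrixOrder in
lemma aux_trace_mul {n : ℕ} (A B : Matrix (Fin n) (Fin n) ℝ) (hA : A.PosSemidef)
    (hB : B.PosSemidef) : 0 ≤ (A * B).trace := by
  have hs : (CFC.sqrt B).PosSemidef := Matrix.nonneg_iff_posSemidef.mp (CFC.sqrt_nonneg B)
  have hq : CFC.sqrt B * CFC.sqrt B = B :=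
    CFC.sqrt_mul_sqrt_self B (Matrix.nonneg_iff_posSemidef.mpr hB)
  have := (aux_conj A _ hA hs.1).trace_nonneg
  rw [Matrix.trace_mul_cycle, hq, Matrix.trace_mul_comm] at this
  exact this

lemma aux_W {n : ℕ} (U V S W Om : Matrix (Fin n) (Fin n) ℝ) (hU : U.PosSemidef)
    (hV : V.PosDef) (hS : S.PosSemidef) (hSV : S * S = V) (hW : W.PosSemidef)
    (hWW : W * W = 1 + (4 : ℝ) • (S * U * S)) (hOm : Om.PosDef)
    (hR : Om + Om * U * Om = V) : W.trace = n + 2 * (Om * U).trace := by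
  have hdO : IsUnit Om.det := (Matrix.isUnit_iff_isUnit_det _).mp hOm.isUnit
  have hdS : IsUnit S.det := by
    have : IsUnit V.det := (Matrix.isUnit_iff_isUnit_det _).mp hV.isUnit
    rw [← hSV, Matrix.det_mul] at this
    exact isUnit_of_mul_isUnit_left this
  obtain ⟨Y, hY⟩ : ∃ Y, Y = Om⁻¹ := ⟨_, rfl⟩
  obtain ⟨T, hT⟩ : ∃ T, T = S⁻¹ := ⟨_, rfl⟩
  have hOY : Om * Y = 1 := by rw [hY, Matrix.mul_nonsing_inv _ hdO]
  have hYO : Y * Om = 1 := by rw [hY, Matrix.nonsing_inv_mul _ hdO]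
  have hST : S * T = 1 := by rw [hT, Matrix.mul_nonsing_inv _ hdS]
  have hTS : T * S = 1 := by rw [hT, Matrix.nonsing_inv_mul _ hdS]
  have hTh : T.IsHermitian := by rw [hT]; exact hS.1.inv
  have hVY : V * Y = 1 + Om * U := by
    rw [← hR, add_mul, hOY, mul_assoc, hOY, mul_one]
  have hYV : Y * V = 1 + U * Om := by
    rw [← hR, mul_add, hYO, ← mul_assoc, ← mul_assoc, hYO, one_mul]
  have hVYV : V * Y * V = V + (Om * U * Om + Om * U * Om * U * Om) := by
    rw [hVY, ← hR]; noncomm_ring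
  have hX1 : S * Y * S = 1 + T * (Om * U * Om + Om * U * Om * U * Om) * T := by
    have e1 : T * (V * Y * V) * T = S * Y * S := by
      rw [← hSV]
      calc T * (S * S * Y * (S * S)) * T = (T * S) * S * Y * S * (S * T) := by noncomm_ring
        _ = _ := by rw [hTS, hST]; noncomm_ring
    have e2 : T * V * T = 1 := by
      rw [← hSV]
      calc T * (S * S) * T = (T * S) * (S * T) := by noncomm_ring
        _ = _ := by rw [hTS, hST]; noncomm_ring
    rw [← e1, hVYV, mul_add, add_mul, e2]
  have hP : (T * (Om * U * Om + Om * U * Om * U * Om) * T).PosSemidef := by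
    refine aux_conj _ _ (((aux_conj _ _ hU hOm.1)).add ?_) hTh
    have := aux_conj _ _ (aux_conj _ _ hOm.posSemidef hU.1) hOm.1
    simpa only [mul_assoc] using this
  have hXX : (S * Y * S) * (S * Y * S) = S * Y * S + S * U * S := by
    calc (S * Y * S) * (S * Y * S) = S * (Y * (S * S)) * Y * S := by noncomm_ring
      _ = S * (1 + U * Om) * Y * S := by rw [hSV, hYV]
      _ = S * Y * S + S * U * (Om * Y) * S := by noncomm_ring
      _ = _ := by rw [hOY, mul_one]
  have hWeq : W = (S * Y * S) + (S * Y * S) - 1 := by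
    apply aux_sqrt_unique _ _ hW
    · have : (S * Y * S) + (S * Y * S) - 1
          = 1 + (T * (Om * U * Om + Om * U * Om * U * Om) * T
            + T * (Om * U * Om + Om * U * Om * U * Om) * T) := by
        rw [hX1]; abel
      rw [this]
      exact Matrix.PosSemidef.one.add (hP.add hP)
    · rw [hWW]
      generalize S * Y * S = X at hXX
      have : (X + X - 1) * (X + X - 1) = (4 : ℝ) • (X * X) - (4 : ℝ) • X + 1 := by
        simp only [mul_sub, sub_mul, mul_add, add_mul, mul_one, one_mul]
        module
      rw [this, hXX]; module
  have htr : (S * Y * S).trace = n + (Om * U).trace := by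
    rw [Matrix.trace_mul_cycle, hSV, hVY]; simp
  rw [hWeq]
  simp only [Matrix.trace_sub, Matrix.trace_add, htr, Matrix.trace_one, Fintype.card_fin]
  ring

lemma aux_unique {n : ℕ} (U Om : Matrix (Fin n) (Fin n) ℝ) (hU : U.PosSemidef)
    (hOm : Om.PosDef) (hR : Om + Om * U * Om = 1 + U) : Om = 1 := by
  have hD : (Om - 1).IsHermitian := hOm.1.sub Matrix.isHermitian_one
  have hE : ((Om - 1) * (Om + 1) * (Om - 1)).PosSemidef :=
    aux_conj _ _ (hOm.posSemidef.add Matrix.PosSemidef.one) hD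
  have h1 := aux_trace_mul _ _ hE hU
  have h2 : (Om - 1) * (Om - 1) + ((Om - 1) * Om * U * Om - (Om - 1) * U) = 0 := by
    have : (Om - 1) * (Om - 1) + ((Om - 1) * Om * U * Om - (Om - 1) * U)
      = (Om - 1) * ((Om + Om * U * Om) - (1 + U)) := by noncomm_ring
    rw [this, hR, sub_self, mul_zero]
  have h3 : ((Om - 1) * Om * U * Om).trace = (Om * (Om - 1) * Om * U).trace := by
    rw [Matrix.trace_mul_comm]; simp only [mul_assoc]
  have h4 : (Om - 1) * (Om + 1) * (Om - 1) * U = Om * (Om - 1) * Om * U - (Om - 1) * U := by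
    noncomm_ring
  have h5 := congrArg Matrix.trace h2
  rw [Matrix.trace_add, Matrix.trace_sub, h3, ← Matrix.trace_sub, ← h4, Matrix.trace_zero] at h5
  have h6 : ((Om - 1)ᴴ * (Om - 1)).trace = 0 := by
    have := (Matrix.posSemidef_conjTranspose_mul_self (Om - 1)).trace_nonneg
    rw [hD.eq] at this ⊢
    linarith
  exact sub_eq_zero.mp (Matrix.trace_conjTranspose_mul_self_eq_zero_iff.mp h6)

/-- Nonnegativity of the "covariance part" of the minimum required supply:
if `Ω` is the unique positive definite solution of the Riccati equation `Ω + ΩUΩ = V`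
(`U` positive semidefinite, `V` positive definite), then
`tr(U + V) − tr √(I + 4 √V U √V) − log det Ω ≥ 0`, with equality iff `V = I + U`
(equivalently, iff `Ω = I`).  Here `sV` is the positive semidefinite symmetric square root
of `V` and `W` that of `I + 4 √V U √V`. -/
theorem covariance_part_nonneg
    {n : ℕ} (U V : Matrix (Fin n) (Fin n) ℝ) (hU : U.PosSemidef) (hV : V.PosDef)
    (sV : Matrix (Fin n) (Fin n) ℝ) (hsV : sV.PosSemidef ∧ sV * sV = V)
    (W : Matrix (Fin n) (Fin n) ℝ)
    (hW : W.PosSemidef ∧ W * W = 1 + (4 : ℝ) • (sV * U * sV))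
    (Om : Matrix (Fin n) (Fin n) ℝ) (hOm : Om.PosDef ∧ Om + Om * U * Om = V) :
    0 ≤ (U + V).trace - W.trace - Real.log Om.det ∧
    ((U + V).trace - W.trace - Real.log Om.det = 0 ↔ V = 1 + U) ∧
    (V = 1 + U ↔ Om = 1) := by
  obtain ⟨hS, hSV⟩ := hsV
  obtain ⟨hW, hWW⟩ := hW
  obtain ⟨hOm, hR⟩ := hOm
  have hiff : V = 1 + U ↔ Om = 1 := by
    constructor
    · intro h
      exact aux_unique U Om hU hOm (hR.trans h)
    · rintro rfl
      rw [← hR]; simp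
  have hWt := aux_W U V sV W Om hU hV hS hSV hW hWW hOm hR
  obtain ⟨hL, hL0⟩ := aux_logdet Om hOm
  have hD : (Om - 1).IsHermitian := hOm.1.sub Matrix.isHermitian_one
  have hQ := (aux_conj U _ hU hD).trace_nonneg
  have hQe : ((Om - 1) * U * (Om - 1)).trace
      = (Om * U * Om).trace - 2 * (Om * U).trace + U.trace := by
    have : (Om - 1) * U * (Om - 1) = Om * U * Om - Om * U - U * Om + U := by noncomm_ring
    rw [this, Matrix.trace_add, Matrix.trace_sub, Matrix.trace_sub, Matrix.trace_mul_comm U Om]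
    ring
  have key : (U + V).trace - W.trace - Real.log Om.det
      = (Om.trace - n - Real.log Om.det) + ((Om - 1) * U * (Om - 1)).trace := by
    rw [hQe, hWt, ← hR, Matrix.trace_add, Matrix.trace_add]
    ring
  refine ⟨by rw [key]; linarith, ?_, hiff⟩
  rw [hiff, key]
  constructor
  · intro h
    exact hL0 (by linarith)
  · rintro rfl
    simp
end
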